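/- arXiv:math/9803044 — 11 statements merged into one kernel-verified Lean document; each statement's English description precedes it below -/
import Mathlib

section
/- Let β = √((5+√17)/2) and let Δ be the graph with the 15 vertices {*, a, b, c, d, e, d̃, c̃, b̃, ã, *̃, f, g, h, h̃} and the 14 edges *–a, a–b, b–c, c–d, d–e, e–d̃, d̃–c̃, c̃–b̃, b̃–ã, ã–*̃, e–f, f–g, g–h, g–h̃. Let A be the (real symmetric) adjacency matrix of Δ. Then the strictly positive vector μ given by μ(*) = μ(*̃) = 1, μ(a) = μ(ã) = β, μ(b) = μ(b̃) = μ(h) = μ(h̃) = β² − 1, μ(c) = μ(c̃) = β³ − 2β, μ(d) = μ(d̃) = 2β² − 1, μ(e) = β³ + β, μ(f) = 2β², μ(g) = β³ − β satisfies A·μ = β·μ; moreover β is an eigenvalue of A and every eigenvalue t of A satisfies |t| ≤ β (so the operator norm of A equals β). -/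
namespace AsaedaHaagerupStmt2

/-- Vertex indexing: 0 = *, 1 = a, 2 = b, 3 = c, 4 = d, 5 = e, 6 = d̃,
7 = c̃, 8 = b̃, 9 = ã, 10 = *̃, 11 = f, 12 = g, 13 = h, 14 = h̃. -/
def edges : List (Fin 15 × Fin 15) :=
  [(0, 1), (1, 2), (2, 3), (3, 4), (4, 5), (5, 6), (6, 7), (7, 8), (8, 9),
   (9, 10), (5, 11), (11, 12), (12, 13), (12, 14)]

/-- The adjacency matrix of the graph Δ. -/
def A : Matrix (Fin 15) (Fin 15) ℝ :=
  fun i j => if (i, j) ∈ edges ∨ (j, i) ∈ edges then 1 else 0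

noncomputable def beta : ℝ := Real.sqrt ((5 + Real.sqrt 17) / 2)

/-- The Perron–Frobenius vector μ. -/
noncomputable def mu : Fin 15 → ℝ :=
  ![1, beta, beta ^ 2 - 1, beta ^ 3 - 2 * beta, 2 * beta ^ 2 - 1,
    beta ^ 3 + beta, 2 * beta ^ 2 - 1, beta ^ 3 - 2 * beta, beta ^ 2 - 1,
    beta, 1, 2 * beta ^ 2, beta ^ 3 - beta, beta ^ 2 - 1, beta ^ 2 - 1]

theorem beta_pos : 0 < beta := by
  unfold beta; positivity

theorem beta_sq : beta ^ 2 = (5 + Real.sqrt 17) / 2 := by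
  unfold beta; exact Real.sq_sqrt (by positivity)

theorem beta_four : beta ^ 4 = 5 * beta ^ 2 - 2 := by
  have h : Real.sqrt 17 ^ 2 = 17 := Real.sq_sqrt (by norm_num)
  have : beta ^ 4 = (beta ^ 2) ^ 2 := by ring
  rw [this, beta_sq]
  nlinarith

theorem beta_sq_gt : 2 < beta ^ 2 := by
  rw [beta_sq]
  have := Real.sqrt_nonneg 17
  linarith

theorem mu_pos : ∀ i, 0 < mu i := by
  have h0 := beta_pos
  have h2 := beta_sq_gt
  have h3 : 0 < beta * (beta ^ 2 - 2) := mul_pos h0 (by linarith)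
  intro i
  fin_cases i <;> simp [mu, -one_lt_sq_iff_one_lt_abs] <;>
    first | nlinarith | (rw [abs_of_pos h0]; nlinarith)

theorem A_mu : A.mulVec mu = beta • mu := by
  have h4 := beta_four
  ext i
  fin_cases i <;>
    simp [Matrix.mulVec, dotProduct, Fin.sum_univ_succ, A, edges, mu] <;> linarith

theorem A_nonneg (i j : Fin 15) : 0 ≤ A i j := by
  unfold A; split_ifs <;> norm_num

/-- Perron–Frobenius bound: compare `|v|` with the positive eigenvector `mu`. -/
theorem eig_bound (t : ℝ) (v : Fin 15 → ℝ) (hv : v ≠ 0) (h : A.mulVec v = t • v) :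
    |t| ≤ beta := by
  obtain ⟨i, hi⟩ := Finite.exists_max (fun i => |v i| / mu i)
  set r := |v i| / mu i with hr
  have hle : ∀ j, |v j| ≤ r * mu j := fun j => (div_le_iff₀ (mu_pos j)).1 (hi j)
  have hvi : |v i| = r * mu i := by
    rw [hr, div_mul_cancel₀ _ (mu_pos i).ne']
  have hpos : 0 < |v i| := by
    obtain ⟨j, hj⟩ := Function.ne_iff.1 hv
    have h1 : 0 < |v j| / mu j := div_pos (abs_pos.2 hj) (mu_pos j)
    rw [hvi]
    exact mul_pos (h1.trans_le (hi j)) (mu_pos i)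
  have e1 : ∑ j, A i j * v j = t * v i := congrFun h i
  have e2 : ∑ j, A i j * mu j = beta * mu i := congrFun A_mu i
  have key : |t| * |v i| ≤ beta * |v i| := by
    calc |t| * |v i| = |∑ j, A i j * v j| := by rw [e1, abs_mul]
      _ ≤ ∑ j, |A i j * v j| := Finset.abs_sum_le_sum_abs _ _
      _ ≤ ∑ j, r * (A i j * mu j) := by
        refine Finset.sum_le_sum fun j _ => ?_
        rw [abs_mul, abs_of_nonneg (A_nonneg i j)]
        have := mul_le_mul_of_nonneg_left (hle j) (A_nonneg i j)
        linarith
      _ = beta * |v i| := by rw [← Finset.mul_sum, e2, hvi]; ring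
  exact le_of_mul_le_mul_right key hpos

theorem asaeda_haagerup_stmt2 :
    (∀ i, 0 < mu i) ∧
    A.mulVec mu = beta • mu ∧
    (∃ v : Fin 15 → ℝ, v ≠ 0 ∧ A.mulVec v = beta • v) ∧
    (∀ t : ℝ, (∃ v : Fin 15 → ℝ, v ≠ 0 ∧ A.mulVec v = t • v) → |t| ≤ beta) := by
  refine ⟨mu_pos, A_mu, ⟨mu, ?_, A_mu⟩, fun t ⟨v, hv, h⟩ => eig_bound t v hv h⟩
  intro h0
  have := mu_pos 0
  simp [h0] at this

end AsaedaHaagerupStmt2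
end

section
/- Let β = √((5+√17)/2) and let Δ' be the graph with the 12 vertices {1, a, 2, c, 3, e, 4, 5, c̃, g, 6, ã} and the 11 edges 1–a, a–2, 2–c, c–3, 3–e, e–4, e–5, 5–c̃, 5–g, g–6, 6–ã. Let A be the (real symmetric) adjacency matrix of Δ'. Then the strictly positive vector μ given by μ(1) = 1, μ(a) = μ(ã) = β, μ(2) = β² − 1, μ(c) = μ(c̃) = β³ − 2β, μ(3) = 2β² − 1, μ(e) = β³ + β, μ(4) = β² + 1, μ(5) = 3β² − 2, μ(g) = β³ − β, μ(6) = β² satisfies A·μ = β·μ; moreover β is an eigenvalue of A and every eigenvalue t of A satisfies |t| ≤ β (so the operator norm of A equals β). -/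
namespace AsaedaHaagerupStmt3

/-- Vertex indexing: 0 = 1, 1 = a, 2 = 2, 3 = c, 4 = 3, 5 = e, 6 = 4,
7 = 5, 8 = c̃, 9 = g, 10 = 6, 11 = ã. -/
def edges : List (Fin 12 × Fin 12) :=
  [(0, 1), (1, 2), (2, 3), (3, 4), (4, 5), (5, 6), (5, 7), (7, 8), (7, 9),
   (9, 10), (10, 11)]

/-- The adjacency matrix of the graph Δ'. -/
def A : Matrix (Fin 12) (Fin 12) ℝ :=
  fun i j => if (i, j) ∈ edges ∨ (j, i) ∈ edges then 1 else 0

noncomputable def beta : ℝ := Real.sqrt ((5 + Real.sqrt 17) / 2)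

/-- The Perron–Frobenius vector μ. -/
noncomputable def mu : Fin 12 → ℝ :=
  ![1, beta, beta ^ 2 - 1, beta ^ 3 - 2 * beta, 2 * beta ^ 2 - 1,
    beta ^ 3 + beta, beta ^ 2 + 1, 3 * beta ^ 2 - 2, beta ^ 3 - 2 * beta,
    beta ^ 3 - beta, beta ^ 2, beta]

theorem beta_sq : beta ^ 2 = (5 + Real.sqrt 17) / 2 := by
  unfold beta
  exact Real.sq_sqrt (by positivity)

theorem beta_pos : 0 < beta := by
  unfold beta
  exact Real.sqrt_pos.mpr (by positivity)

theorem beta_four : beta ^ 4 = 5 * beta ^ 2 - 2 := by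
  have h17 : Real.sqrt 17 ^ 2 = 17 := Real.sq_sqrt (by norm_num)
  have h : beta ^ 4 = (beta ^ 2) ^ 2 := by ring
  rw [h, beta_sq]
  nlinarith

theorem beta_sq_gt : 4 < beta ^ 2 := by
  rw [beta_sq]
  have : (4 : ℝ) < Real.sqrt 17 := Real.lt_sqrt_of_sq_lt (by norm_num)
  linarith

theorem mu_pos : ∀ i, 0 < mu i := by
  have h0 := beta_pos
  have h2 := beta_sq_gt
  have h3 : 0 < beta * (beta ^ 2 - 2) := mul_pos h0 (by linarith)
  intro i
  fin_cases i <;> simp [mu, -sub_pos] <;> nlinarith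

theorem A_mu : A.mulVec mu = beta • mu := by
  have h4 := beta_four
  ext i
  fin_cases i <;>
    simp [Matrix.mulVec, dotProduct, Fin.sum_univ_succ, A, edges, mu] <;>
    linarith

theorem A_nonneg (i j : Fin 12) : 0 ≤ A i j := by
  unfold A
  split_ifs <;> norm_num

theorem eig_bound (t : ℝ) (v : Fin 12 → ℝ) (hv : v ≠ 0) (h : A.mulVec v = t • v) :
    |t| ≤ beta := by
  obtain ⟨k, hk⟩ := Finite.exists_max (fun i => |v i| / mu i)
  set r := |v k| / mu k with hr
  have hle : ∀ i, |v i| ≤ r * mu i := fun i => (div_le_iff₀ (mu_pos i)).mp (hk i)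
  have hvk : |v k| = r * mu k := by
    rw [hr, div_mul_cancel₀ _ (mu_pos k).ne']
  have hpos : 0 < |v k| := by
    refine lt_of_le_of_ne (abs_nonneg _) fun h0 => hv ?_
    have hr0 : r = 0 := by rw [hr, ← h0, zero_div]
    ext i
    have := hle i
    rw [hr0, zero_mul] at this
    exact abs_nonpos_iff.mp this
  have hmu : ∑ j, A k j * mu j = beta * mu k := congrFun A_mu k
  have hvt : ∑ j, A k j * v j = t * v k := congrFun h k
  refine le_of_mul_le_mul_right ?_ hpos
  calc |t| * |v k| = |∑ j, A k j * v j| := by rw [hvt, abs_mul]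
    _ ≤ ∑ j, |A k j * v j| := Finset.abs_sum_le_sum_abs _ _
    _ ≤ ∑ j, r * (A k j * mu j) := by
        refine Finset.sum_le_sum fun j _ => ?_
        rw [abs_mul, abs_of_nonneg (A_nonneg k j)]
        nlinarith [mul_le_mul_of_nonneg_left (hle j) (A_nonneg k j)]
    _ = beta * |v k| := by rw [← Finset.mul_sum, hmu, hvk]; ring

theorem asaeda_haagerup_stmt3 :
    (∀ i, 0 < mu i) ∧
    A.mulVec mu = beta • mu ∧
    (∃ v : Fin 12 → ℝ, v ≠ 0 ∧ A.mulVec v = beta • v) ∧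
    (∀ t : ℝ, (∃ v : Fin 12 → ℝ, v ≠ 0 ∧ A.mulVec v = t • v) → |t| ≤ beta) := by
  refine ⟨mu_pos, A_mu, ⟨mu, ?_, A_mu⟩, fun t ⟨v, hv, h⟩ => eig_bound t v hv h⟩
  intro h
  have := mu_pos 0
  rw [h] at this
  simp at this

end AsaedaHaagerupStmt3
end

section
/- Let λ = √((5+√13)/2), ρ = (−√(λ²−4) + i·√(8−λ²))/2 and τ = (−√(λ²−1) − i·√(5−λ²))/2, and let u₂ = (√(λ²−2)/3, √(λ²−2)/(√3·λ), −(λ²−3)/√3), u₃ = ((λ²−2)/(√3·λ), −(λ²−2)/3, 0) in ℂ³. Then the vector f = (ρ/(λ(λ²−2)), τ/√3, 1/(λ²−2)) ∈ ℂ³ satisfies f = −(1/√3)·u₂ + (√(λ²−2)/(2λ) + i·(λ²−3)/(2λ))·u₃, and its complex conjugate satisfies conj(f) = −(1/√3)·u₂ + (√(λ²−2)/(2λ) − i·(λ²−3)/(2λ))·u₃. -/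
namespace AsaedaHaagerupStmt5

noncomputable def lam : ℝ := Real.sqrt ((5 + Real.sqrt 13) / 2)

noncomputable def rho : ℂ :=
  (-Complex.ofReal (Real.sqrt (lam ^ 2 - 4)) +
    Complex.ofReal (Real.sqrt (8 - lam ^ 2)) * Complex.I) / 2

noncomputable def tau : ℂ :=
  (-Complex.ofReal (Real.sqrt (lam ^ 2 - 1)) -
    Complex.ofReal (Real.sqrt (5 - lam ^ 2)) * Complex.I) / 2

noncomputable def u2 : Fin 3 → ℂ :=
  ![Complex.ofReal (Real.sqrt (lam ^ 2 - 2) / 3),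
    Complex.ofReal (Real.sqrt (lam ^ 2 - 2) / (Real.sqrt 3 * lam)),
    Complex.ofReal (-((lam ^ 2 - 3) / Real.sqrt 3))]

noncomputable def u3 : Fin 3 → ℂ :=
  ![Complex.ofReal ((lam ^ 2 - 2) / (Real.sqrt 3 * lam)),
    Complex.ofReal (-((lam ^ 2 - 2) / 3)), 0]

noncomputable def f : Fin 3 → ℂ :=
  ![rho / (Complex.ofReal lam * Complex.ofReal (lam ^ 2 - 2)),
    tau / Complex.ofReal (Real.sqrt 3),
    Complex.ofReal (1 / (lam ^ 2 - 2))]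

theorem lam_facts : 0 < lam ∧ 4 < lam ^ 2 ∧ lam ^ 2 < 5 ∧ lam ^ 4 = 5 * lam ^ 2 - 3 := by
  have h13 : Real.sqrt 13 ^ 2 = 13 := Real.sq_sqrt (by norm_num)
  have h0 : 0 ≤ Real.sqrt 13 := Real.sqrt_nonneg _
  have hl : lam ^ 2 = (5 + Real.sqrt 13) / 2 := Real.sq_sqrt (by positivity)
  refine ⟨Real.sqrt_pos.mpr (by positivity), by rw [hl]; nlinarith, by rw [hl]; nlinarith, ?_⟩
  have : lam ^ 4 = (lam ^ 2) ^ 2 := by ring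
  rw [this, hl]
  linear_combination h13 / 4

theorem sqrt_facts :
    Real.sqrt (lam ^ 2 - 4) = Real.sqrt (lam ^ 2 - 2) * (lam ^ 2 - 3) / (Real.sqrt 3 * lam) ∧
    Real.sqrt (8 - lam ^ 2) = Real.sqrt 3 * (lam ^ 2 - 2) / lam ∧
    Real.sqrt (lam ^ 2 - 1) = Real.sqrt (lam ^ 2 - 2) * lam / Real.sqrt 3 ∧
    Real.sqrt (5 - lam ^ 2) = Real.sqrt 3 / lam := by
  obtain ⟨hp, h4, h5, hq⟩ := lam_facts
  have h3 : Real.sqrt 3 ^ 2 = 3 := Real.sq_sqrt (by norm_num)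
  have h3p : 0 < Real.sqrt 3 := Real.sqrt_pos.mpr (by norm_num)
  have hs : Real.sqrt (lam ^ 2 - 2) ^ 2 = lam ^ 2 - 2 := Real.sq_sqrt (by linarith)
  have hsp : 0 < Real.sqrt (lam ^ 2 - 2) := Real.sqrt_pos.mpr (by linarith)
  have a3 : 0 < lam ^ 2 - 3 := by linarith
  have a2 : 0 < lam ^ 2 - 2 := by linarith
  refine ⟨?_, ?_, ?_, ?_⟩
  all_goals
    rw [Real.sqrt_eq_iff_mul_self_eq (by linarith) (by positivity), ← sq]
    simp only [div_pow, mul_pow, h3, hs]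
    field_simp
  · linear_combination (6 - lam ^ 2) * hq
  · linear_combination -4 * hq
  · linear_combination -hq
  · linear_combination -hq

theorem f_eq : f = (-Complex.ofReal (1 / Real.sqrt 3)) • u2 +
        (Complex.ofReal (Real.sqrt (lam ^ 2 - 2) / (2 * lam)) +
          Complex.ofReal ((lam ^ 2 - 3) / (2 * lam)) * Complex.I) • u3 := by
  obtain ⟨hp, h4, h5, hq⟩ := lam_facts
  obtain ⟨e1, e2, e3, e4⟩ := sqrt_facts
  have h3 : Real.sqrt 3 ^ 2 = 3 := Real.sq_sqrt (by norm_num)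
  have h3p : Real.sqrt 3 ≠ 0 := (Real.sqrt_pos.mpr (by norm_num)).ne'
  have a2 : lam ^ 2 - 2 ≠ 0 := by linarith
  have hp' := hp.ne'
  unfold f u2 u3 rho tau
  rw [e1, e2, e3, e4]
  generalize Real.sqrt (lam ^ 2 - 2) = s
  generalize Real.sqrt 3 = q at *
  generalize lam = L at *
  have H3 : (q : ℂ) ^ 2 = 3 := by exact_mod_cast h3
  have HQ : (L : ℂ) ^ 4 = 5 * L ^ 2 - 3 := by exact_mod_cast hq
  have H3p : (q : ℂ) ≠ 0 := by exact_mod_cast h3p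
  have HL : (L : ℂ) ≠ 0 := by exact_mod_cast hp'
  have H2 : (L : ℂ) ^ 2 - 2 ≠ 0 := by exact_mod_cast a2
  ext k
  fin_cases k
  · simp
    field_simp
    linear_combination 3 * (L ^ 2 - 2) * Complex.I * H3 - (3 * (L ^ 2 - 2) * Complex.I + s) * HQ
  · simp
    field_simp
    linear_combination (-3 * Complex.I + (s + Complex.I * (L ^ 2 - 3)) * (L ^ 2 - 2)) * H3 + 3 * Complex.I * HQ
  · simp
    field_simp
    linear_combination H3 - HQ

theorem asaeda_haagerup_stmt5 :
    f = (-Complex.ofReal (1 / Real.sqrt 3)) • u2 +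
        (Complex.ofReal (Real.sqrt (lam ^ 2 - 2) / (2 * lam)) +
          Complex.ofReal ((lam ^ 2 - 3) / (2 * lam)) * Complex.I) • u3 ∧
    (fun k => (starRingEnd ℂ) (f k)) =
      (-Complex.ofReal (1 / Real.sqrt 3)) • u2 +
        (Complex.ofReal (Real.sqrt (lam ^ 2 - 2) / (2 * lam)) -
          Complex.ofReal ((lam ^ 2 - 3) / (2 * lam)) * Complex.I) • u3 := by
  refine ⟨f_eq, ?_⟩
  rw [f_eq]
  ext k
  fin_cases k <;> simp [u2, u3, Complex.conj_ofNat] <;> first | ring1 | (left; ring1)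

end AsaedaHaagerupStmt5
end

section
/- Let λ = √((5+√13)/2), ρ = (−√(λ²−4) + i·√(8−λ²))/2 and τ = (−√(λ²−1) − i·√(5−λ²))/2, and let u₂ = (√(λ²−2)/3, √(λ²−2)/(√3·λ), −(λ²−3)/√3), u₃ = ((λ²−2)/(√3·λ), −(λ²−2)/3, 0) in ℂ³. Then the vector f' = ((λ²−1)·conj(ρ)²/(λ(λ²−2)), conj(τ)²/√3, 1/((λ²−2)√(λ²−1))) ∈ ℂ³ satisfies f' = −√((λ²−4)/3)·u₂ + (−(λ²−2)/(2√3) + i·√(λ²−3)/2)·u₃, and its complex conjugate satisfies conj(f') = −√((λ²−4)/3)·u₂ + (−(λ²−2)/(2√3) − i·√(λ²−3)/2)·u₃. -/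
namespace AsaedaHaagerupStmt6

noncomputable def lam : ℝ := Real.sqrt ((5 + Real.sqrt 13) / 2)

noncomputable def rho : ℂ :=
  (-Complex.ofReal (Real.sqrt (lam ^ 2 - 4)) +
    Complex.ofReal (Real.sqrt (8 - lam ^ 2)) * Complex.I) / 2

noncomputable def tau : ℂ :=
  (-Complex.ofReal (Real.sqrt (lam ^ 2 - 1)) -
    Complex.ofReal (Real.sqrt (5 - lam ^ 2)) * Complex.I) / 2

noncomputable def u2 : Fin 3 → ℂ :=
  ![Complex.ofReal (Real.sqrt (lam ^ 2 - 2) / 3),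
    Complex.ofReal (Real.sqrt (lam ^ 2 - 2) / (Real.sqrt 3 * lam)),
    Complex.ofReal (-((lam ^ 2 - 3) / Real.sqrt 3))]

noncomputable def u3 : Fin 3 → ℂ :=
  ![Complex.ofReal ((lam ^ 2 - 2) / (Real.sqrt 3 * lam)),
    Complex.ofReal (-((lam ^ 2 - 2) / 3)), 0]

noncomputable def f' : Fin 3 → ℂ :=
  ![Complex.ofReal (lam ^ 2 - 1) * (starRingEnd ℂ rho) ^ 2 /
      (Complex.ofReal lam * Complex.ofReal (lam ^ 2 - 2)),
    (starRingEnd ℂ tau) ^ 2 / Complex.ofReal (Real.sqrt 3),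
    Complex.ofReal (1 / ((lam ^ 2 - 2) * Real.sqrt (lam ^ 2 - 1)))]

theorem conj2 : (starRingEnd ℂ) 2 = 2 := Complex.conj_ofNat 2

theorem conj3 : (starRingEnd ℂ) 3 = 3 := Complex.conj_ofNat 3

theorem lam_facts : 0 < lam ∧ lam ^ 2 * lam ^ 2 = 5 * lam ^ 2 - 3 ∧ 4 < lam ^ 2 ∧ lam ^ 2 < 5 := by
  have h13 : Real.sqrt 13 ^ 2 = 13 := Real.sq_sqrt (by norm_num)
  have h0 : 0 ≤ Real.sqrt 13 := Real.sqrt_nonneg _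
  have hx : lam ^ 2 = (5 + Real.sqrt 13) / 2 := Real.sq_sqrt (by positivity)
  refine ⟨Real.sqrt_pos.2 (by positivity), ?_, ?_, ?_⟩
  · rw [hx]; nlinarith
  · rw [hx]; nlinarith
  · rw [hx]; nlinarith

theorem real_facts :
    (lam ^ 2 - 1) * (Real.sqrt (lam ^ 2 - 4) ^ 2 - Real.sqrt (8 - lam ^ 2) ^ 2) / 4
        / (lam * (lam ^ 2 - 2)) =
      -(Real.sqrt ((lam ^ 2 - 4) / 3) * (Real.sqrt (lam ^ 2 - 2) / 3))
        - (lam ^ 2 - 2) / (2 * Real.sqrt 3) * ((lam ^ 2 - 2) / (Real.sqrt 3 * lam)) ∧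
    (lam ^ 2 - 1) * (Real.sqrt (lam ^ 2 - 4) * Real.sqrt (8 - lam ^ 2)) / 2
        / (lam * (lam ^ 2 - 2)) =
      Real.sqrt (lam ^ 2 - 3) / 2 * ((lam ^ 2 - 2) / (Real.sqrt 3 * lam)) ∧
    (Real.sqrt (lam ^ 2 - 1) ^ 2 - Real.sqrt (5 - lam ^ 2) ^ 2) / 4 / Real.sqrt 3 =
      -(Real.sqrt ((lam ^ 2 - 4) / 3) * (Real.sqrt (lam ^ 2 - 2) / (Real.sqrt 3 * lam)))
        + (lam ^ 2 - 2) / (2 * Real.sqrt 3) * ((lam ^ 2 - 2) / 3) ∧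
    (Real.sqrt (lam ^ 2 - 1) * Real.sqrt (5 - lam ^ 2)) / 2 / Real.sqrt 3 =
      Real.sqrt (lam ^ 2 - 3) / 2 * ((lam ^ 2 - 2) / 3) ∧
    1 / ((lam ^ 2 - 2) * Real.sqrt (lam ^ 2 - 1)) =
      Real.sqrt ((lam ^ 2 - 4) / 3) * ((lam ^ 2 - 3) / Real.sqrt 3) := by
  obtain ⟨hL, hq, h4, h5⟩ := lam_facts
  have a2 : Real.sqrt (lam ^ 2 - 4) ^ 2 = lam ^ 2 - 4 := Real.sq_sqrt (by linarith)
  have b2 : Real.sqrt (8 - lam ^ 2) ^ 2 = 8 - lam ^ 2 := Real.sq_sqrt (by linarith)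
  have c2 : Real.sqrt (lam ^ 2 - 1) ^ 2 = lam ^ 2 - 1 := Real.sq_sqrt (by linarith)
  have d2 : Real.sqrt (5 - lam ^ 2) ^ 2 = 5 - lam ^ 2 := Real.sq_sqrt (by linarith)
  have e2 : Real.sqrt (lam ^ 2 - 2) ^ 2 = lam ^ 2 - 2 := Real.sq_sqrt (by linarith)
  have g2 : Real.sqrt (lam ^ 2 - 3) ^ 2 = lam ^ 2 - 3 := Real.sq_sqrt (by linarith)
  have k2 : Real.sqrt ((lam ^ 2 - 4) / 3) ^ 2 = (lam ^ 2 - 4) / 3 := Real.sq_sqrt (by linarith)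
  have s2 : Real.sqrt 3 ^ 2 = 3 := Real.sq_sqrt (by norm_num)
  have a0 : 0 < Real.sqrt (lam ^ 2 - 4) := Real.sqrt_pos.2 (by linarith)
  have b0 : 0 < Real.sqrt (8 - lam ^ 2) := Real.sqrt_pos.2 (by linarith)
  have c0 : 0 < Real.sqrt (lam ^ 2 - 1) := Real.sqrt_pos.2 (by linarith)
  have d0 : 0 < Real.sqrt (5 - lam ^ 2) := Real.sqrt_pos.2 (by linarith)
  have e0 : 0 < Real.sqrt (lam ^ 2 - 2) := Real.sqrt_pos.2 (by linarith)
  have g0 : 0 < Real.sqrt (lam ^ 2 - 3) := Real.sqrt_pos.2 (by linarith)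
  have k0 : 0 < Real.sqrt ((lam ^ 2 - 4) / 3) := Real.sqrt_pos.2 (by linarith)
  have s0 : 0 < Real.sqrt 3 := Real.sqrt_pos.2 (by norm_num)
  generalize Real.sqrt (lam ^ 2 - 4) = a at *
  generalize Real.sqrt (8 - lam ^ 2) = b at *
  generalize Real.sqrt (lam ^ 2 - 1) = c at *
  generalize Real.sqrt (5 - lam ^ 2) = d at *
  generalize Real.sqrt (lam ^ 2 - 2) = e at *
  generalize Real.sqrt (lam ^ 2 - 3) = g at *
  generalize Real.sqrt ((lam ^ 2 - 4) / 3) = k at *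
  generalize Real.sqrt 3 = s at *
  generalize lam = L at *
  obtain ⟨x, hx⟩ : ∃ x, x = L ^ 2 := ⟨_, rfl⟩
  rw [← hx] at hq h4 h5 a2 b2 c2 d2 e2 g2 k2 ⊢
  have hx2 : x - 2 ≠ 0 := by intro h; linarith
  have p1 : k * e * L = 1 := by
    refine (sq_eq_sq₀ (by positivity) (by norm_num)).1 ?_
    rw [mul_pow, mul_pow, k2, e2, ← hx]; linear_combination (x / 3 - 1 / 3) * hq
  have p2 : (x - 1) * (a * b) * s = g * (x - 2) ^ 2 := by
    refine (sq_eq_sq₀ (mul_nonneg (mul_nonneg (by linarith) (by positivity)) s0.le)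
      (by positivity)).1 ?_
    simp only [mul_pow]; rw [a2, b2, s2, g2]; grind
  have p3 : c * d * s = g * (x - 2) := by
    refine (sq_eq_sq₀ (by positivity) (mul_nonneg g0.le (by linarith))).1 ?_
    simp only [mul_pow]; rw [c2, d2, s2, g2]; grind
  have p4 : c * k * s = 1 := by
    refine (sq_eq_sq₀ (by positivity) (by norm_num)).1 ?_
    simp only [mul_pow]; rw [c2, k2, s2]; grind
  have hL' := hL.ne'
  have hs' := s0.ne'
  have hc' := c0.ne'
  have pk : k * e = 1 / L := by field_simp; linarith
  refine ⟨?_, ?_, ?_, ?_, ?_⟩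
  · rw [a2, b2, ← mul_div_assoc, pk]; field_simp; grind
  · field_simp; grind
  · rw [c2, d2, ← mul_div_assoc, pk]; field_simp; grind
  · field_simp; grind
  · field_simp; grind

theorem main_eq :
    f' = (-Complex.ofReal (Real.sqrt ((lam ^ 2 - 4) / 3))) • u2 +
        (Complex.ofReal (-((lam ^ 2 - 2) / (2 * Real.sqrt 3))) +
          Complex.ofReal (Real.sqrt (lam ^ 2 - 3) / 2) * Complex.I) • u3 := by
  obtain ⟨r1, i1, r2, i2, r3⟩ := real_facts
  generalize hk : Real.sqrt ((lam ^ 2 - 4) / 3) = k at *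
  have hI : Complex.I ^ 2 = -1 := Complex.I_sq
  replace r1 := congrArg Complex.ofReal r1
  replace i1 := congrArg Complex.ofReal i1
  replace r2 := congrArg Complex.ofReal r2
  replace i2 := congrArg Complex.ofReal i2
  replace r3 := congrArg Complex.ofReal r3
  push_cast at r1 i1 r2 i2 r3
  funext j
  fin_cases j
  · simp [f', u2, u3, rho, -one_div, conj2, Complex.conj_ofReal]
    linear_combination r1 + Complex.I * i1 + ((lam : ℂ) ^ 2 - 1) * (Real.sqrt (8 - lam ^ 2) : ℂ) ^ 2 / 4
        / (lam * ((lam : ℂ) ^ 2 - 2)) * hI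
  · simp [f', u2, u3, tau, -one_div, conj2, Complex.conj_ofReal]
    linear_combination r2 - Complex.I * i2 + (Real.sqrt (5 - lam ^ 2) : ℂ) ^ 2 / 4 / (Real.sqrt 3 : ℂ) * hI
  · simp [f', u2, u3, -one_div, conj2, Complex.conj_ofReal]
    linear_combination r3

theorem asaeda_haagerup_stmt6 :
    f' = (-Complex.ofReal (Real.sqrt ((lam ^ 2 - 4) / 3))) • u2 +
        (Complex.ofReal (-((lam ^ 2 - 2) / (2 * Real.sqrt 3))) +
          Complex.ofReal (Real.sqrt (lam ^ 2 - 3) / 2) * Complex.I) • u3 ∧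
    (fun k => (starRingEnd ℂ) (f' k)) =
      (-Complex.ofReal (Real.sqrt ((lam ^ 2 - 4) / 3))) • u2 +
        (Complex.ofReal (-((lam ^ 2 - 2) / (2 * Real.sqrt 3))) -
          Complex.ofReal (Real.sqrt (lam ^ 2 - 3) / 2) * Complex.I) • u3 := by
  refine ⟨main_eq, ?_⟩
  rw [main_eq]
  funext j
  fin_cases j <;> simp [u2, u3, conj2, conj3, -mul_eq_mul_right_iff] <;> ring

end AsaedaHaagerupStmt6
end

section
/- Let λ = √((5+√13)/2) and ρ = (−√(λ²−4) + i·√(8−λ²))/2. Then the 3×3 complex matrix with rows r₁ = (√((λ²−4)/(λ²−2)), −1/√3, −√(λ²−2)/λ), r₂ = (ρ/√(λ²−2), −1/√3, √(λ²−2)/(2λ) + i·(λ²−3)/(2λ)), r₃ = (conj(ρ)/√(λ²−2), −1/√3, √(λ²−2)/(2λ) − i·(λ²−3)/(2λ)) is unitary (its rows form an orthonormal basis of ℂ³ with respect to the standard Hermitian inner product). -/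
namespace AsaedaHaagerupStmt8

noncomputable def lam : ℝ := Real.sqrt ((5 + Real.sqrt 13) / 2)

noncomputable def rho : ℂ :=
  (-Complex.ofReal (Real.sqrt (lam ^ 2 - 4)) +
    Complex.ofReal (Real.sqrt (8 - lam ^ 2)) * Complex.I) / 2

noncomputable def U : Matrix (Fin 3) (Fin 3) ℂ :=
  !![Complex.ofReal (Real.sqrt ((lam ^ 2 - 4) / (lam ^ 2 - 2))),
       Complex.ofReal (-(1 / Real.sqrt 3)),
       Complex.ofReal (-(Real.sqrt (lam ^ 2 - 2) / lam));
     rho / Complex.ofReal (Real.sqrt (lam ^ 2 - 2)),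
       Complex.ofReal (-(1 / Real.sqrt 3)),
       Complex.ofReal (Real.sqrt (lam ^ 2 - 2) / (2 * lam)) +
         Complex.ofReal ((lam ^ 2 - 3) / (2 * lam)) * Complex.I;
     (starRingEnd ℂ rho) / Complex.ofReal (Real.sqrt (lam ^ 2 - 2)),
       Complex.ofReal (-(1 / Real.sqrt 3)),
       Complex.ofReal (Real.sqrt (lam ^ 2 - 2) / (2 * lam)) -
         Complex.ofReal ((lam ^ 2 - 3) / (2 * lam)) * Complex.I]

theorem asaeda_haagerup_stmt8 : U ∈ Matrix.unitaryGroup (Fin 3) ℂ := by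
  have h13 : Real.sqrt 13 ^ 2 = 13 := Real.sq_sqrt (by norm_num)
  have h13p : 0 ≤ Real.sqrt 13 := Real.sqrt_nonneg _
  have h3 : 3.6 < Real.sqrt 13 := Real.lt_sqrt_of_sq_lt (by norm_num)
  have h4 : Real.sqrt 13 < 4 := by nlinarith
  have hL : lam ^ 2 = (5 + Real.sqrt 13) / 2 := Real.sq_sqrt (by positivity)
  have hlp : 0 < lam := Real.sqrt_pos.mpr (by positivity)
  have hq : (lam ^ 2) ^ 2 = 5 * lam ^ 2 - 3 := by rw [hL]; nlinarith
  have hL4 : 4 < lam ^ 2 := by rw [hL]; linarith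
  have hL5 : lam ^ 2 < 5 := by rw [hL]; linarith
  have hdiv : Real.sqrt ((lam ^ 2 - 4) / (lam ^ 2 - 2))
      = Real.sqrt (lam ^ 2 - 4) * (Real.sqrt (lam ^ 2 - 2))⁻¹ := by
    rw [Real.sqrt_div (by linarith), div_eq_mul_inv]
  have ha : Real.sqrt (lam ^ 2 - 4) ^ 2 = lam ^ 2 - 4 := Real.sq_sqrt (by linarith)
  have hb : Real.sqrt (8 - lam ^ 2) ^ 2 = 8 - lam ^ 2 := Real.sq_sqrt (by linarith)
  have hs : Real.sqrt (lam ^ 2 - 2) ^ 2 = lam ^ 2 - 2 := Real.sq_sqrt (by linarith)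
  have hsp : 0 < Real.sqrt (lam ^ 2 - 2) := Real.sqrt_pos.mpr (by linarith)
  have hab : Real.sqrt (lam ^ 2 - 4) * Real.sqrt (8 - lam ^ 2)
      = Real.sqrt (lam ^ 2 - 2) * (5 - lam ^ 2) := by
    have h1 : 0 ≤ Real.sqrt (lam ^ 2 - 4) * Real.sqrt (8 - lam ^ 2) := by positivity
    have h2 : 0 ≤ Real.sqrt (lam ^ 2 - 2) * (5 - lam ^ 2) :=
      mul_nonneg hsp.le (by linarith)
    rw [← sq_eq_sq₀ h1 h2, mul_pow, mul_pow, ha, hb, hs]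
    linear_combination (6 - lam ^ 2) * hq
  have hv : (Real.sqrt 3)⁻¹ ^ 2 = 1 / 3 := by
    rw [inv_pow, Real.sq_sqrt (by norm_num)]; norm_num
  have hu : (Real.sqrt (lam ^ 2 - 2))⁻¹ ^ 2 = (lam ^ 2 - 3) / 3 := by
    rw [inv_pow, hs, inv_eq_iff_eq_inv, eq_comm, inv_eq_iff_eq_inv, eq_comm]
    apply inv_eq_of_mul_eq_one_right
    linear_combination hq / 3
  have hp : lam⁻¹ ^ 2 = (5 - lam ^ 2) / 3 := by
    rw [inv_pow]
    apply inv_eq_of_mul_eq_one_right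
    linear_combination -hq / 3
  rw [Matrix.mem_unitaryGroup_iff]
  unfold U rho
  rw [hdiv]
  generalize Real.sqrt (lam ^ 2 - 4) = a at *
  generalize Real.sqrt (8 - lam ^ 2) = b at *
  generalize Real.sqrt (lam ^ 2 - 2) = s at *
  generalize Real.sqrt 3 = t at *
  generalize lam = l at *
  clear hdiv h13 h13p h3 h4 hL hlp hL4 hL5 hsp
  simp only [div_eq_mul_inv, mul_inv, one_mul, ← Complex.ofReal_inv] at *
  generalize s⁻¹ = u at *
  generalize t⁻¹ = v at *
  generalize l⁻¹ = p at *
  ext i j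
  fin_cases i <;> fin_cases j <;> apply Complex.ext <;>
    simp [Matrix.mul_apply, Fin.sum_univ_three, Complex.mul_re, Complex.mul_im, Complex.inv_re, Complex.inv_im, Complex.normSq,
      -Complex.ofReal_inv, -Complex.ofReal_pow] <;> grind

end AsaedaHaagerupStmt8
end

section
/- Let λ = √((5+√13)/2). Then the 3×3 complex matrix with rows s₁ = (−1/√3, √(λ²−2)/(2λ) − i·(λ²−3)/(2λ), 1/√(λ²−2)), s₂ = ((λ²−3)/√3, 0, 1/√(λ²−2)), s₃ = (−√((λ²−4)/3), −(λ²−2)/(2√3) + i·√(λ²−3)/2, √((λ²−4)/(λ²−2))) is unitary (its rows form an orthonormal basis of ℂ³ with respect to the standard Hermitian inner product). -/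
namespace AsaedaHaagerupStmt9

noncomputable def lam : ℝ := Real.sqrt ((5 + Real.sqrt 13) / 2)

noncomputable def U : Matrix (Fin 3) (Fin 3) ℂ :=
  !![Complex.ofReal (-(1 / Real.sqrt 3)),
       Complex.ofReal (Real.sqrt (lam ^ 2 - 2) / (2 * lam)) -
         Complex.ofReal ((lam ^ 2 - 3) / (2 * lam)) * Complex.I,
       Complex.ofReal (1 / Real.sqrt (lam ^ 2 - 2));
     Complex.ofReal ((lam ^ 2 - 3) / Real.sqrt 3), 0,
       Complex.ofReal (1 / Real.sqrt (lam ^ 2 - 2));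
     Complex.ofReal (-Real.sqrt ((lam ^ 2 - 4) / 3)),
       Complex.ofReal (-((lam ^ 2 - 2) / (2 * Real.sqrt 3))) +
         Complex.ofReal (Real.sqrt (lam ^ 2 - 3) / 2) * Complex.I,
       Complex.ofReal (Real.sqrt ((lam ^ 2 - 4) / (lam ^ 2 - 2)))]

theorem lam_facts : ∃ s w l : ℝ, 0 < s ∧ 0 < w ∧ 0 < l ∧ s ^ 2 = 3 ∧ l ^ 2 = w ^ 2 + 2 ∧
    w ^ 4 = w ^ 2 + 3 ∧ Real.sqrt 3 = s ∧ lam = l ∧ Real.sqrt (lam ^ 2 - 2) = w ∧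
    Real.sqrt (lam ^ 2 - 3) = s / w ∧ Real.sqrt ((lam ^ 2 - 4) / 3) = 1 / (w * l) ∧
    Real.sqrt ((lam ^ 2 - 4) / (lam ^ 2 - 2)) = s / (w ^ 2 * l) := by
  have h13 : Real.sqrt 13 ^ 2 = 13 := Real.sq_sqrt (by norm_num)
  have h13p : 3 < Real.sqrt 13 := Real.lt_sqrt_of_sq_lt (by norm_num)
  have hL : lam ^ 2 = (5 + Real.sqrt 13) / 2 := Real.sq_sqrt (by positivity)
  have hl : 0 < lam := Real.sqrt_pos.mpr (by positivity)
  have hs : Real.sqrt 3 ^ 2 = 3 := Real.sq_sqrt (by norm_num)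
  have hsp : 0 < Real.sqrt 3 := Real.sqrt_pos.mpr (by norm_num)
  have hw : Real.sqrt (lam ^ 2 - 2) ^ 2 = lam ^ 2 - 2 := Real.sq_sqrt (by linarith)
  have hwp : 0 < Real.sqrt (lam ^ 2 - 2) := Real.sqrt_pos.mpr (by linarith)
  generalize Real.sqrt (lam ^ 2 - 2) = w at *
  generalize Real.sqrt 3 = s at *
  have hq : w ^ 4 = w ^ 2 + 3 := by
    have : w ^ 2 = (1 + Real.sqrt 13) / 2 := by linarith
    have h4 : w ^ 4 = (w ^ 2) ^ 2 := by ring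
    rw [h4, this]; linarith
  have hl2 : lam ^ 2 = w ^ 2 + 2 := by linarith
  refine ⟨s, w, lam, hsp, hwp, hl, hs, hl2, hq, rfl, rfl, rfl, ?_, ?_, ?_⟩
  · rw [Real.sqrt_eq_iff_mul_self_eq_of_pos (by positivity)]
    field_simp
    rw [hl2, hs]; linarith
  · rw [Real.sqrt_eq_iff_mul_self_eq_of_pos (by positivity)]
    field_simp
    rw [hl2]; linear_combination (-w ^ 2 - 1) * hq
  · rw [Real.sqrt_eq_iff_mul_self_eq_of_pos (by positivity), hl2]
    have : w ^ 2 + 2 - 2 = w ^ 2 := by ring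
    rw [this]
    field_simp
    rw [hl2, hs]; linear_combination (-w ^ 2 - 1) * hq

theorem asaeda_haagerup_stmt9 : U ∈ Matrix.unitaryGroup (Fin 3) ℂ := by
  obtain ⟨s, w, l, hs, hw, hl, hs2, hl2, hw4, e1, e2, e3, e4, e5, e6⟩ := lam_facts
  rw [Matrix.mem_unitaryGroup_iff]
  unfold U
  rw [e3, e4, e5, e6, e1, e2, hl2]
  ext i j
  fin_cases i <;> fin_cases j <;> apply Complex.ext <;>
    simp [Matrix.mul_apply, Fin.sum_univ_three, Matrix.star_apply, -Complex.ofReal_div, -Complex.ofReal_mul,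
      -Complex.ofReal_inv, -Complex.ofReal_neg, -Complex.ofReal_pow, -Complex.ofReal_sub, -Complex.ofReal_add] <;>
    field_simp <;> grind

end AsaedaHaagerupStmt9
end

section
/- Let β = √((5+√17)/2). Then the 3×3 real matrix [[1/(√2·β), −√(2β²−1)/(√2·β), 0], [√(β²+1)/(√2·β), (1/(√2·β))·√((β²+1)/(2β²−1)), −√((β²−2)/(2β²−1))], [√(β²−2)/(√2·β), (1/(√2·β))·√((β²−2)/(2β²−1)), √((β²+1)/(2β²−1))]] is orthogonal (its rows form an orthonormal basis of ℝ³). -/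
namespace AsaedaHaagerupStmt10

noncomputable def beta : ℝ := Real.sqrt ((5 + Real.sqrt 17) / 2)

noncomputable def U : Matrix (Fin 3) (Fin 3) ℝ :=
  !![1 / (Real.sqrt 2 * beta),
       -(Real.sqrt (2 * beta ^ 2 - 1) / (Real.sqrt 2 * beta)), 0;
     Real.sqrt (beta ^ 2 + 1) / (Real.sqrt 2 * beta),
       (1 / (Real.sqrt 2 * beta)) *
         Real.sqrt ((beta ^ 2 + 1) / (2 * beta ^ 2 - 1)),
       -Real.sqrt ((beta ^ 2 - 2) / (2 * beta ^ 2 - 1));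
     Real.sqrt (beta ^ 2 - 2) / (Real.sqrt 2 * beta),
       (1 / (Real.sqrt 2 * beta)) *
         Real.sqrt ((beta ^ 2 - 2) / (2 * beta ^ 2 - 1)),
       Real.sqrt ((beta ^ 2 + 1) / (2 * beta ^ 2 - 1))]

/-- Orthogonality of the matrix after naming the square roots that occur in it. -/
theorem orth_aux (a b c p : ℝ) (hc : c ≠ 0) (hp : p ≠ 0)
    (h1 : p ^ 2 = c ^ 2 + 1) (h2 : a ^ 2 + b ^ 2 = c ^ 2) :
    (!![1 / p, -(c / p), 0; a / p, (1 / p) * (a / c), -(b / c);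
        b / p, (1 / p) * (b / c), a / c] : Matrix (Fin 3) (Fin 3) ℝ)
      ∈ Matrix.orthogonalGroup (Fin 3) ℝ := by
  rw [Matrix.mem_orthogonalGroup_iff]
  ext i j
  fin_cases i <;> fin_cases j <;>
    simp [Matrix.mul_apply, Fin.sum_univ_three] <;> field_simp <;> grind

theorem asaeda_haagerup_stmt10 : U ∈ Matrix.orthogonalGroup (Fin 3) ℝ := by
  have h17 : 0 ≤ Real.sqrt 17 := Real.sqrt_nonneg _
  have hb2 : beta ^ 2 = (5 + Real.sqrt 17) / 2 := Real.sq_sqrt (by positivity)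
  have hb : beta ≠ 0 := by
    intro h
    rw [h] at hb2
    linarith
  have ha : (0 : ℝ) ≤ beta ^ 2 + 1 := by linarith
  have hd : (0 : ℝ) ≤ beta ^ 2 - 2 := by linarith
  have hc : (0 : ℝ) < 2 * beta ^ 2 - 1 := by linarith
  unfold U
  rw [Real.sqrt_div ha, Real.sqrt_div hd]
  apply orth_aux
  · exact (Real.sqrt_pos.2 hc).ne'
  · exact mul_ne_zero (by positivity) hb
  · rw [mul_pow, Real.sq_sqrt hc.le, Real.sq_sqrt (by norm_num)]
    ring
  · rw [Real.sq_sqrt ha, Real.sq_sqrt hd, Real.sq_sqrt hc.le]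
    ring

end AsaedaHaagerupStmt10
end

section
/- Let β = √((5+√17)/2). Consider the 4×4 real matrix U with rows (2(β²−2)/(β⁴+4), 2(β²+4)/(β⁴+4), −√(β²(β²−2)/(β⁴+4)), −2/√(β²(β²−1)(β⁴+4))), (2(β²+4)/(β⁴+4), β²/(β⁴+4), 2β/√((2β²−1)(β⁴+4)), (β²−1)√(β²−1)/√(β²(β⁴+4))), (−√(β²(β²−2)/(β⁴+4)), 2β/√((2β²−1)(β⁴+4)), 0, √2/β), (−2/√(β²(β²−1)(β⁴+4)), (β²−1)√(β²−1)/√(β²(β⁴+4)), √2/β, −1/(β²−2)). Then U is symmetric and orthogonal; in particular U² is the 4×4 identity matrix. -/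
namespace AsaedaHaagerupStmt11

noncomputable def beta : ℝ := Real.sqrt ((5 + Real.sqrt 17) / 2)

noncomputable def U : Matrix (Fin 4) (Fin 4) ℝ :=
  !![2 * (beta ^ 2 - 2) / (beta ^ 4 + 4),
       2 * (beta ^ 2 + 4) / (beta ^ 4 + 4),
       -Real.sqrt (beta ^ 2 * (beta ^ 2 - 2) / (beta ^ 4 + 4)),
       -(2 / Real.sqrt (beta ^ 2 * (beta ^ 2 - 1) * (beta ^ 4 + 4)));
     2 * (beta ^ 2 + 4) / (beta ^ 4 + 4),
       beta ^ 2 / (beta ^ 4 + 4),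
       2 * beta / Real.sqrt ((2 * beta ^ 2 - 1) * (beta ^ 4 + 4)),
       (beta ^ 2 - 1) * Real.sqrt (beta ^ 2 - 1) /
         Real.sqrt (beta ^ 2 * (beta ^ 4 + 4));
     -Real.sqrt (beta ^ 2 * (beta ^ 2 - 2) / (beta ^ 4 + 4)),
       2 * beta / Real.sqrt ((2 * beta ^ 2 - 1) * (beta ^ 4 + 4)),
       0, Real.sqrt 2 / beta;
     -(2 / Real.sqrt (beta ^ 2 * (beta ^ 2 - 1) * (beta ^ 4 + 4))),
       (beta ^ 2 - 1) * Real.sqrt (beta ^ 2 - 1) /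
         Real.sqrt (beta ^ 2 * (beta ^ 4 + 4)),
       Real.sqrt 2 / beta, -(1 / (beta ^ 2 - 2))]

/-- `U` has five entries in `ℚ(β²)`; the rest are multiples of two square roots. -/
lemma key (B P Q : ℝ) (hB : B ^ 2 = 5 * B - 2) (hP : P ^ 2 = (2 * B - 3) / 13)
    (hQ : Q ^ 2 = (49 * B - 223) / 52) (M : Matrix (Fin 4) (Fin 4) ℝ)
    (hM : M = !![(3 * B - 11) / 13, (59 - 9 * B) / 26, -P, -Q;
      (59 - 9 * B) / 26, (B + 5) / 52, (5 - B) * P, (3 * B - 1) / 2 * Q;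
      -P, (5 - B) * P, 0, (3 * B - 4) * (P * Q);
      -Q, (3 * B - 1) / 2 * Q, (3 * B - 4) * (P * Q), -((B - 3) / 4)]) :
    M.IsSymm ∧ M * M = 1 := by
  have hPQ : P ^ 2 * Q ^ 2 = (2 * B - 3) / 13 * ((49 * B - 223) / 52) := by rw [hP, hQ]
  subst hM
  constructor
  · ext i j
    fin_cases i <;> fin_cases j <;> rfl
  · ext i j
    fin_cases i <;> fin_cases j <;> simp [Matrix.mul_apply, Fin.sum_univ_four] <;> grind

lemma eq_of_sq {x y : ℝ} (hx : 0 ≤ x) (hy : 0 ≤ y) (h : x ^ 2 = y ^ 2) : x = y :=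
  (pow_left_inj₀ hx hy two_ne_zero).1 h

theorem asaeda_haagerup_stmt11 :
    U.IsSymm ∧ U ∈ Matrix.orthogonalGroup (Fin 4) ℝ ∧ U * U = 1 := by
  obtain ⟨hs, hm⟩ : U.IsSymm ∧ U * U = 1 := by
    have h17 : (Real.sqrt 17) ^ 2 = 17 := Real.sq_sqrt (by norm_num)
    have h17l : (4.12 : ℝ) < Real.sqrt 17 := Real.lt_sqrt_of_sq_lt (by norm_num)
    have hb2 : beta ^ 2 = (5 + Real.sqrt 17) / 2 := Real.sq_sqrt (by positivity)
    have hb0 : 0 < beta := Real.sqrt_pos.2 (by positivity)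
    have hb4 : beta ^ 4 = (beta ^ 2) ^ 2 := by ring
    obtain ⟨B, hBdef⟩ : ∃ B, B = beta ^ 2 := ⟨_, rfl⟩
    have hB : B ^ 2 = 5 * B - 2 := by rw [hBdef, hb2]; linarith
    have hBl : 4.56 < B := by rw [hBdef, hb2]; linarith
    have hBu : B < 5 := by nlinarith
    have hD : beta ^ 4 + 4 = 5 * B + 2 := by rw [hb4, ← hBdef, hB]; ring
    have hP : (Real.sqrt ((2 * B - 3) / 13)) ^ 2 = (2 * B - 3) / 13 :=
      Real.sq_sqrt (by linarith)
    have hQ : (Real.sqrt ((49 * B - 223) / 52)) ^ 2 = (49 * B - 223) / 52 :=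
      Real.sq_sqrt (by linarith)
    have hP0 := Real.sqrt_nonneg ((2 * B - 3) / 13)
    have hQ0 := Real.sqrt_nonneg ((49 * B - 223) / 52)
    refine key B _ _ hB hP hQ U ?_
    generalize Real.sqrt ((2 * B - 3) / 13) = P at *
    generalize Real.sqrt ((49 * B - 223) / 52) = Q at *
    have n1 : (5 * B + 2) ≠ 0 := by apply ne_of_gt; linarith
    have n2 : B - 2 ≠ 0 := by apply ne_of_gt; linarith
    have n3 : B ≠ 0 := by apply ne_of_gt; linarith
    have n4 : B - 1 ≠ 0 := by apply ne_of_gt; linarith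
    have n5 : 2 * B - 1 ≠ 0 := by apply ne_of_gt; linarith
    have e1 : 2 * (B - 2) / (5 * B + 2) = (3 * B - 11) / 13 := by
      rw [div_eq_div_iff n1 (by norm_num)]; linear_combination (-15) * hB
    have e2 : 2 * (B + 4) / (5 * B + 2) = (59 - 9 * B) / 26 := by
      rw [div_eq_div_iff n1 (by norm_num)]; linear_combination 45 * hB
    have e3 : B / (5 * B + 2) = (B + 5) / 52 := by
      rw [div_eq_div_iff n1 (by norm_num)]; linear_combination (-5) * hB
    have e4 : 1 / (B - 2) = (B - 3) / 4 := by
      rw [div_eq_div_iff n2 (by norm_num)]; linear_combination (-1) * hB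
    have e5 : Real.sqrt (B * (B - 2) / (5 * B + 2)) = P := by
      apply eq_of_sq (Real.sqrt_nonneg _) hP0
      rw [Real.sq_sqrt (div_nonneg (mul_nonneg (by linarith) (by linarith)) (by linarith)), hP,
        div_eq_div_iff n1 (by norm_num)]
      grind
    have e6 : 2 / Real.sqrt (B * (B - 1) * (5 * B + 2)) = Q := by
      apply eq_of_sq (by positivity) hQ0
      rw [div_pow, Real.sq_sqrt (mul_nonneg (mul_nonneg (by linarith) (by linarith))
        (by linarith)), hQ, div_eq_div_iff (by simp [n1, n3, n4, n5]) (by norm_num)]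
      grind
    have e7 : 2 * beta / Real.sqrt ((2 * B - 1) * (5 * B + 2)) = (5 - B) * P := by
      apply eq_of_sq (by positivity) (mul_nonneg (by linarith) hP0)
      rw [div_pow, Real.sq_sqrt (mul_nonneg (by linarith) (by linarith)), mul_pow, mul_pow, hP,
        ← hBdef, div_eq_iff (by simp [n1, n3, n4, n5])]
      grind
    have e8 : (B - 1) * Real.sqrt (B - 1) / Real.sqrt (B * (5 * B + 2))
        = (3 * B - 1) / 2 * Q := by
      apply eq_of_sq
        (div_nonneg (mul_nonneg (by linarith) (Real.sqrt_nonneg _)) (Real.sqrt_nonneg _))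
        (mul_nonneg (by linarith) hQ0)
      rw [div_pow, Real.sq_sqrt (mul_nonneg (by linarith) (by linarith)), mul_pow, mul_pow, hQ,
        Real.sq_sqrt (by linarith), div_eq_iff (by simp [n1, n3, n4, n5])]
      grind
    have e9 : Real.sqrt 2 / beta = (3 * B - 4) * (P * Q) := by
      apply eq_of_sq (by positivity) (mul_nonneg (by linarith) (mul_nonneg hP0 hQ0))
      rw [div_pow, Real.sq_sqrt (by norm_num), mul_pow, mul_pow, hP, hQ, ← hBdef,
        div_eq_iff n3]
      grind
    rw [U, hD, ← hBdef, e1, e2, e3, e4, e5, e6, e7, e8, e9]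
  refine ⟨hs, ?_, hm⟩
  rw [Matrix.mem_orthogonalGroup_iff]
  rw [hs.eq, hm]

end AsaedaHaagerupStmt11
end

section
/- Let β = √((5+√17)/2). Then the 3×3 real matrix [[−1/(β²+1), −√2·β/(β²+1), β²/(β²+1)], [−√2·β/(β²+1), −β²/(2(β²−1)), −√2·β/(β²+1)], [β²/(β²+1), −√2·β/(β²+1), −1/(β²+1)]] is symmetric and orthogonal; in particular its square is the 3×3 identity matrix. -/
namespace AsaedaHaagerupStmt12

noncomputable def beta : ℝ := Real.sqrt ((5 + Real.sqrt 17) / 2)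

noncomputable def U : Matrix (Fin 3) (Fin 3) ℝ :=
  !![-(1 / (beta ^ 2 + 1)),
       -(Real.sqrt 2 * beta / (beta ^ 2 + 1)),
       beta ^ 2 / (beta ^ 2 + 1);
     -(Real.sqrt 2 * beta / (beta ^ 2 + 1)),
       -(beta ^ 2 / (2 * (beta ^ 2 - 1))),
       -(Real.sqrt 2 * beta / (beta ^ 2 + 1));
     beta ^ 2 / (beta ^ 2 + 1),
       -(Real.sqrt 2 * beta / (beta ^ 2 + 1)),
       -(1 / (beta ^ 2 + 1))]

theorem beta_sq_gt : 2 < beta ^ 2 := by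
  have h := Real.sqrt_nonneg 17
  rw [beta, Real.sq_sqrt (by positivity)]
  linarith

theorem beta_quartic : (beta ^ 2) ^ 2 - 5 * beta ^ 2 + 2 = 0 := by
  have h : Real.sqrt 17 ^ 2 = 17 := Real.sq_sqrt (by norm_num)
  rw [beta, Real.sq_sqrt (by positivity)]
  linarith

theorem mid_eq : beta ^ 2 / (2 * (beta ^ 2 - 1)) = (beta ^ 2 - 1) / (beta ^ 2 + 1) := by
  have h := beta_sq_gt
  have h1 : 2 * (beta ^ 2 - 1) ≠ 0 := by linarith
  have h2 : beta ^ 2 + 1 ≠ 0 := by linarith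
  rw [div_eq_div_iff h1 h2]
  linarith [beta_quartic]

theorem U_symm : U.IsSymm := by
  ext i j
  fin_cases i <;> fin_cases j <;> simp [U]

theorem U_sq : U * U = 1 := by
  have h2 : beta ^ 2 + 1 ≠ 0 := by linarith [beta_sq_gt]
  have hs : Real.sqrt 2 ^ 2 = 2 := Real.sq_sqrt (by norm_num)
  unfold U
  rw [mid_eq]
  ext i j
  fin_cases i <;> fin_cases j <;>
    simp [Matrix.mul_apply, Fin.sum_univ_three] <;> field_simp <;> (try rw [hs]) <;> ring

theorem asaeda_haagerup_stmt12 :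
    U.IsSymm ∧ U ∈ Matrix.orthogonalGroup (Fin 3) ℝ ∧ U * U = 1 := by
  refine ⟨U_symm, ?_, U_sq⟩
  rw [Matrix.mem_orthogonalGroup_iff]
  change U * U.transpose = 1
  rw [U_symm.eq, U_sq]

end AsaedaHaagerupStmt12
end

section
/- Let β = √((5+√17)/2). Then the 3×3 real matrix [[(β²−2)/(β²+1), β(β²−2)/√(2(β⁴−1)), −1/(β²+1)], [−√(β²−2)/(2√(β²+1)), √((β²−2)/(β⁴−1)), β(β²−2)/√(2(β⁴−1))], [−β²/(β²+1), √(β²−2)/(2√(β²+1)), −(β²−2)/(β²+1)]] is orthogonal (its rows form an orthonormal basis of ℝ³). -/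
namespace AsaedaHaagerupStmt13

noncomputable def beta : ℝ := Real.sqrt ((5 + Real.sqrt 17) / 2)

noncomputable def U : Matrix (Fin 3) (Fin 3) ℝ :=
  !![(beta ^ 2 - 2) / (beta ^ 2 + 1),
       beta * (beta ^ 2 - 2) / Real.sqrt (2 * (beta ^ 4 - 1)),
       -(1 / (beta ^ 2 + 1));
     -(Real.sqrt (beta ^ 2 - 2) / (2 * Real.sqrt (beta ^ 2 + 1))),
       Real.sqrt ((beta ^ 2 - 2) / (beta ^ 4 - 1)),
       beta * (beta ^ 2 - 2) / Real.sqrt (2 * (beta ^ 4 - 1));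
     -(beta ^ 2 / (beta ^ 2 + 1)),
       Real.sqrt (beta ^ 2 - 2) / (2 * Real.sqrt (beta ^ 2 + 1)),
       -((beta ^ 2 - 2) / (beta ^ 2 + 1))]

theorem asaeda_haagerup_stmt13 : U ∈ Matrix.orthogonalGroup (Fin 3) ℝ := by
  have h17 : Real.sqrt 17 ^ 2 = 17 := Real.sq_sqrt (by norm_num)
  have h17p : 0 ≤ Real.sqrt 17 := Real.sqrt_nonneg _
  have hb : beta ^ 2 = (5 + Real.sqrt 17) / 2 := Real.sq_sqrt (by positivity)
  have hb0 : 0 ≤ beta := Real.sqrt_nonneg _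
  obtain ⟨s, hs⟩ : ∃ s, s = beta ^ 2 := ⟨_, rfl⟩
  have hrel : s ^ 2 = 5 * s - 2 := by rw [hs, hb]; nlinarith
  have hs2 : 2 < s := by rw [hs, hb]; linarith
  have h4 : beta ^ 4 = s ^ 2 := by rw [hs]; ring
  have hs1 : s + 1 ≠ 0 := by linarith
  have hD : 0 < s ^ 2 - 1 := by nlinarith
  have hr : 1 / (s + 1) = (6 - s) / 8 := by
    rw [div_eq_div_iff hs1 (by norm_num)]; linarith
  have hp : (s - 2) / (s + 1) = (s - 2) * ((6 - s) / 8) := by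
    rw [← hr]; ring
  have hv : s / (s + 1) = s * ((6 - s) / 8) := by
    rw [← hr]; ring
  have hs6 : s < 6 := by nlinarith
  have hw : Real.sqrt ((s - 2) / (s ^ 2 - 1)) = (6 - s) / 4 := by
    rw [Real.sqrt_eq_iff_mul_self_eq (div_nonneg (by linarith) hD.le) (by linarith),
      div_eq_iff hD.ne']
    grind
  obtain ⟨t, ht⟩ : ∃ t, t = Real.sqrt (s - 2) / (2 * Real.sqrt (s + 1)) := ⟨_, rfl⟩
  have ht0 : 0 ≤ t := by rw [ht]; positivity
  have ht2 : t ^ 2 = (3 * s - 10) / 32 := by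
    rw [ht, div_pow, mul_pow, Real.sq_sqrt (by linarith), Real.sq_sqrt (by linarith),
      div_eq_div_iff (by linarith) (by norm_num)]
    linarith
  have hq : beta * (s - 2) / Real.sqrt (2 * (s ^ 2 - 1)) = (s - 2) * t := by
    have h0 : 0 ≤ Real.sqrt (2 * (s ^ 2 - 1)) := Real.sqrt_nonneg _
    refine (pow_left_inj₀ (div_nonneg (mul_nonneg hb0 (by linarith)) h0)
      (mul_nonneg (by linarith) ht0) two_ne_zero).mp ?_
    rw [div_pow, mul_pow, mul_pow, Real.sq_sqrt (by linarith), ← hs, ht2,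
      div_eq_iff (by linarith)]
    grind
  have hU : U = !![(s - 2) * ((6 - s) / 8), (s - 2) * t, -((6 - s) / 8);
      -t, (6 - s) / 4, (s - 2) * t;
      -(s * ((6 - s) / 8)), t, -((s - 2) * ((6 - s) / 8))] := by
    unfold U
    rw [h4, ← hs, ← ht, hp, hq, hr, hv, hw]
  rw [Matrix.mem_orthogonalGroup_iff, hU]
  ext i j
  fin_cases i <;> fin_cases j <;>
    simp [Matrix.mul_apply, Fin.sum_univ_three, Matrix.star_eq_conjTranspose] <;> grind

end AsaedaHaagerupStmt13
end

section
/- Let β = √((5+√17)/2). Then the 3×3 real matrix [[2(β²−2)/(β⁴+4), −2(β²−2)²/(β⁴+4), −√((β²−2)³/(β⁴+4))], [−2(β²−2)²/(β⁴+4), −2(7β²+2)/((β²−1)(β⁴+4)), (2/β²)·√((β²−2)³/(β⁴+4))], [−√((β²−2)³/(β⁴+4)), (2/β²)·√((β²−2)³/(β⁴+4)), −2/β²]] is symmetric and orthogonal; in particular its square is the 3×3 identity matrix. -/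
namespace AsaedaHaagerupStmt14

noncomputable def beta : ℝ := Real.sqrt ((5 + Real.sqrt 17) / 2)

noncomputable def U : Matrix (Fin 3) (Fin 3) ℝ :=
  !![2 * (beta ^ 2 - 2) / (beta ^ 4 + 4),
       -(2 * (beta ^ 2 - 2) ^ 2 / (beta ^ 4 + 4)),
       -Real.sqrt ((beta ^ 2 - 2) ^ 3 / (beta ^ 4 + 4));
     -(2 * (beta ^ 2 - 2) ^ 2 / (beta ^ 4 + 4)),
       -(2 * (7 * beta ^ 2 + 2) / ((beta ^ 2 - 1) * (beta ^ 4 + 4))),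
       (2 / beta ^ 2) * Real.sqrt ((beta ^ 2 - 2) ^ 3 / (beta ^ 4 + 4));
     -Real.sqrt ((beta ^ 2 - 2) ^ 3 / (beta ^ 4 + 4)),
       (2 / beta ^ 2) * Real.sqrt ((beta ^ 2 - 2) ^ 3 / (beta ^ 4 + 4)),
       -(2 / beta ^ 2)]

theorem beta_facts : beta ^ 4 = 5 * beta ^ 2 - 2 ∧ 4 < beta ^ 2 := by
  have hw : Real.sqrt 17 ^ 2 = 17 := Real.sq_sqrt (by norm_num)
  have hw4 : 4 < Real.sqrt 17 := Real.lt_sqrt_of_sq_lt (by norm_num)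
  have hb : beta ^ 2 = (5 + Real.sqrt 17) / 2 := Real.sq_sqrt (by positivity)
  constructor
  · have : beta ^ 4 = (beta ^ 2) ^ 2 := by ring
    rw [this, hb]
    linear_combination hw / 4
  · rw [hb]
    linarith

/-- Entries of `U` reduced modulo the minimal polynomial of `x = beta ^ 2`. -/
theorem U_reduced : ∃ x s : ℝ, x ^ 2 = 5 * x - 2 ∧ s ^ 2 = (5 * x - 14) / 13 ∧
    U = !![(3 * x - 11) / 13, (2 * x - 16) / 13, -s;
           (2 * x - 16) / 13, (63 - 16 * x) / 13, (5 - x) * s;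
           -s, (5 - x) * s, -(5 - x)] := by
  obtain ⟨h4, hgt⟩ := beta_facts
  unfold U
  rw [h4]
  generalize hx : beta ^ 2 = x at *
  have hq : x ^ 2 = 5 * x - 2 := by
    rw [← h4, ← hx]
    ring
  have hD : 5 * x - 2 + 4 ≠ 0 := by linarith
  have hx0 : x ≠ 0 := by linarith
  have hx1 : x - 1 ≠ 0 := by linarith
  have e1 : 2 * (x - 2) / (5 * x - 2 + 4) = (3 * x - 11) / 13 := by
    rw [div_eq_div_iff hD (by norm_num)]
    linear_combination (-15) * hq
  have e2 : -(2 * (x - 2) ^ 2 / (5 * x - 2 + 4)) = (2 * x - 16) / 13 := by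
    rw [← neg_div, div_eq_div_iff hD (by norm_num)]
    linear_combination (-36) * hq
  have e3 : (x - 2) ^ 3 / (5 * x - 2 + 4) = (5 * x - 14) / 13 := by
    rw [div_eq_div_iff hD (by norm_num)]
    linear_combination (13 * x - 38) * hq
  have e4 : -(2 * (7 * x + 2) / ((x - 1) * (5 * x - 2 + 4))) = (63 - 16 * x) / 13 := by
    rw [← neg_div, div_eq_div_iff (mul_ne_zero hx1 hD) (by norm_num)]
    linear_combination (80 * x + 37) * hq
  have e5 : 2 / x = 5 - x := by
    rw [div_eq_iff hx0]
    linear_combination hq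
  refine ⟨x, Real.sqrt ((5 * x - 14) / 13), hq, Real.sq_sqrt (by linarith), ?_⟩
  rw [e1, e2, e3, e4, e5]

theorem asaeda_haagerup_stmt14 :
    U.IsSymm ∧ U ∈ Matrix.orthogonalGroup (Fin 3) ℝ ∧ U * U = 1 := by
  obtain ⟨x, s, hq, hs, hU⟩ := U_reduced
  have hsymm : U.IsSymm := by
    rw [hU]
    ext i j
    fin_cases i <;> fin_cases j <;> simp
  have hsq : U * U = 1 := by
    rw [hU]
    ext i j
    fin_cases i <;> fin_cases j <;> simp [Matrix.mul_apply, Fin.sum_univ_three] <;> grind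
  refine ⟨hsymm, ?_, hsq⟩
  rw [Matrix.mem_orthogonalGroup_iff]
  rw [hsymm.eq, hsq]

end AsaedaHaagerupStmt14
end
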